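/- Let a = 1/2 and let Φ be the 4×3 real matrix with rows (a, a, a), (−a, a, −a), (−a, −a, a), (−a, a, a) (i.e., Φᵀ = [[a,−a,−a,−a],[a,a,−a,a],[a,−a,a,a]]). Then Φᵀ Φ = I₃, and for every 3-element subset S of {1,2,3,4} and every nonzero u ∈ ℤ³, ‖Φ_S u‖² ≥ 3/4, where Φ_S is the 3×3 matrix of rows of Φ indexed by S. Moreover for every such S there exists a nonzero u ∈ ℤ³ with ‖Φ_S u‖² = 3/4. -/

import Mathlib

open Matrix

/-- The `k × k` submatrix of `Φ` formed by the rows indexed by the `k`-element subset `S`. -/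
def rowsSub {n k : ℕ} (Φ : Matrix (Fin n) (Fin k) ℝ)
    (S : {s : Finset (Fin n) // s.card = k}) : Matrix (Fin k) (Fin k) ℝ :=
  fun i j => Φ ((S.1.orderIsoOfFin S.2 i : Fin n)) j

/-- Squared Euclidean norm of a vector in `ℝ^k`. -/
def sqnorm {k : ℕ} (x : Fin k → ℝ) : ℝ := ∑ i, x i ^ 2

/-! Write `Φ = (1 / 2) • A` with `A` a sign matrix, and let `y = A u` with `u` integral. All
coordinates of `y` have the parity of `∑ j, u j`: if they are odd, three of them contribute at
least `3` to the sum of squares; if they are even, a single nonzero one contributes at least `4`.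
Some retained coordinate is nonzero, because `∑ i, y i ^ 2 = 4 * ‖u‖ ^ 2` by orthogonality of the
columns, whereas the deleted coordinate has `y i ^ 2 ≤ 3 * ‖u‖ ^ 2` by Cauchy–Schwarz. Unit
vectors attain `3`. -/

theorem sqnorm_rowsSub_mulVec {n k : ℕ} (Φ : Matrix (Fin n) (Fin k) ℝ)
    (S : {s : Finset (Fin n) // s.card = k}) (x : Fin k → ℝ) :
    sqnorm (rowsSub Φ S *ᵥ x) = ∑ i ∈ S.1, (Φ *ᵥ x) i ^ 2 := by
  rw [← Finset.sum_coe_sort]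
  exact (S.1.orderIsoOfFin S.2).toEquiv.sum_comp fun i : S.1 => (Φ *ᵥ x) i ^ 2

theorem sqnorm_rowsSub_smul_intCast {n k : ℕ} (c : ℝ) (A : Matrix (Fin n) (Fin k) ℤ)
    (S : {s : Finset (Fin n) // s.card = k}) (u : Fin k → ℤ) :
    sqnorm (rowsSub (c • A.map (Int.cast : ℤ → ℝ)) S *ᵥ fun j => (u j : ℝ)) =
      c ^ 2 * ((∑ i ∈ S.1, (A *ᵥ u) i ^ 2 : ℤ) : ℝ) := by
  have hcast (i : Fin n) :
      (A.map (Int.cast : ℤ → ℝ) *ᵥ fun j => (u j : ℝ)) i = ((A *ᵥ u) i : ℤ) :=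
    (RingHom.map_mulVec (Int.castRingHom ℝ) A u i).symm
  simp only [sqnorm_rowsSub_mulVec, smul_mulVec, Pi.smul_apply, smul_eq_mul, hcast, mul_pow,
    ← Finset.mul_sum, Int.cast_sum, Int.cast_pow]

theorem smul_intCast_transpose_mul_self_eq_one {m n R : Type*} [Fintype m] [DecidableEq n]
    [CommRing R] {A : Matrix m n ℤ} {d : ℤ} (hA : Aᵀ * A = d • 1) {c : R} (hc : c ^ 2 * d = 1) :
    (c • A.map (Int.cast : ℤ → R))ᵀ * (c • A.map (Int.cast : ℤ → R)) = 1 := by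
  have hmap : (A.map (Int.cast : ℤ → R))ᵀ * A.map (Int.cast : ℤ → R) = (d : R) • 1 := by
    calc (A.map (Int.cast : ℤ → R))ᵀ * A.map (Int.cast : ℤ → R)
        = (Aᵀ * A).map (Int.castRingHom R) := (Matrix.map_mul (f := Int.castRingHom R)).symm
      _ = (d : R) • 1 := by
        rw [hA, smul_one_eq_diagonal, diagonal_map (map_zero _), smul_one_eq_diagonal, eq_intCast]
  rw [transpose_smul, Matrix.smul_mul, Matrix.mul_smul, hmap, smul_smul, smul_smul, ← sq, hc,
    one_smul]

theorem odd_of_isUnit {a : ℤ} (ha : IsUnit a) : Odd a := by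
  rcases Int.isUnit_iff.mp ha with rfl | rfl <;> decide

theorem four_le_sq_of_even {a : ℤ} (ha : Even a) (h0 : a ≠ 0) : 4 ≤ a ^ 2 := by
  obtain ⟨b, rfl⟩ := ha
  have hb : 0 < b ^ 2 := sq_pos_of_ne_zero (by rintro rfl; exact h0 rfl)
  linarith [show (b + b) ^ 2 = 4 * b ^ 2 by ring]

theorem min_card_four_le_sum_sq {ι : Type*} {s : Finset ι} {y : ι → ℤ}
    (hparity : (∀ i ∈ s, Odd (y i)) ∨ ∀ i ∈ s, Even (y i)) (hy : 0 < ∑ i ∈ s, y i ^ 2) :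
    min (s.card : ℤ) 4 ≤ ∑ i ∈ s, y i ^ 2 := by
  rcases hparity with hodd | heven
  · have hone (i : ι) (hi : i ∈ s) : 1 ≤ y i ^ 2 :=
      sq_pos_of_ne_zero fun h => Int.not_odd_zero (h ▸ hodd i hi)
    refine (min_le_left _ _).trans ?_
    simpa using s.card_nsmul_le_sum _ 1 hone
  · obtain ⟨i, hi, hyi⟩ := Finset.exists_ne_zero_of_sum_ne_zero hy.ne'
    calc min (s.card : ℤ) 4 ≤ 4 := min_le_right _ _
      _ ≤ y i ^ 2 := four_le_sq_of_even (heven i hi) (pow_ne_zero_iff two_ne_zero |>.mp hyi)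
      _ ≤ ∑ i ∈ s, y i ^ 2 := Finset.single_le_sum (fun j _ => sq_nonneg (y j)) hi

theorem sum_sq_mulVec_of_transpose_mul_self {m n R : Type*} [Fintype m] [Fintype n]
    [DecidableEq n] [CommRing R] {A : Matrix m n R} {d : R} (hA : Aᵀ * A = d • 1) (u : n → R) :
    ∑ i, (A *ᵥ u) i ^ 2 = d * (u ⬝ᵥ u) := by
  calc ∑ i, (A *ᵥ u) i ^ 2 = (A *ᵥ u) ⬝ᵥ (A *ᵥ u) := by simp only [dotProduct, sq]
    _ = u ⬝ᵥ ((Aᵀ * A) *ᵥ u) := by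
      rw [← mulVec_mulVec, dotProduct_mulVec u, vecMul_transpose]
    _ = d * (u ⬝ᵥ u) := by rw [hA, smul_mulVec, one_mulVec, dotProduct_smul, smul_eq_mul]

section IntegerMatrix

variable {m n : Type*} [Fintype n] {A : Matrix m n ℤ}

theorem even_mulVec_iff_of_odd (hA : ∀ i j, Odd (A i j)) (u : n → ℤ) (i : m) :
    Even ((A *ᵥ u) i) ↔ Even (∑ j, u j) := by
  have hdiff : Even ((A *ᵥ u) i - ∑ j, u j) := by
    have hsum : (A *ᵥ u) i - ∑ j, u j = ∑ j, (A i j - 1) * u j := by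
      simp only [mulVec, dotProduct, sub_one_mul, Finset.sum_sub_distrib]
    rw [hsum]
    exact Finset.even_sum _ fun j _ => ((hA i j).sub_odd odd_one).mul_right _
  exact Int.even_sub.mp hdiff

theorem sq_mulVec_le_of_isUnit (hA : ∀ i j, IsUnit (A i j)) (u : n → ℤ) (i : m) :
    (A *ᵥ u) i ^ 2 ≤ Fintype.card n * (u ⬝ᵥ u) := by
  calc (A *ᵥ u) i ^ 2 ≤ (∑ j, A i j ^ 2) * ∑ j, u j ^ 2 := Finset.sum_mul_sq_le_sq_mul_sq _ _ _
    _ = Fintype.card n * (u ⬝ᵥ u) := by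
      simp [Int.isUnit_sq (hA i _), dotProduct, sq]

theorem sum_sq_mulVec_single_one_of_isUnit [DecidableEq n] (hA : ∀ i j, IsUnit (A i j))
    (s : Finset m) (j : n) : ∑ i ∈ s, (A *ᵥ Pi.single j 1) i ^ 2 = s.card := by
  simp [Int.isUnit_sq (hA _ _)]

variable [Fintype m] [DecidableEq m] [DecidableEq n]

theorem le_sum_sq_mulVec_of_isUnit (hA : ∀ i j, IsUnit (A i j)) {d : ℤ} (horth : Aᵀ * A = d • 1)
    (s : Finset m) (u : n → ℤ) :
    (d - sᶜ.card * Fintype.card n) * (u ⬝ᵥ u) ≤ ∑ i ∈ s, (A *ᵥ u) i ^ 2 := by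
  have htotal : ∑ i ∈ s, (A *ᵥ u) i ^ 2 + ∑ i ∈ sᶜ, (A *ᵥ u) i ^ 2 = d * (u ⬝ᵥ u) := by
    rw [Finset.sum_add_sum_compl, sum_sq_mulVec_of_transpose_mul_self horth]
  have hdeleted : ∑ i ∈ sᶜ, (A *ᵥ u) i ^ 2 ≤ sᶜ.card * (Fintype.card n * (u ⬝ᵥ u)) := by
    simpa using Finset.sum_le_card_nsmul sᶜ _ _ fun i _ => sq_mulVec_le_of_isUnit hA u i
  linarith

theorem min_card_four_le_sum_sq_mulVec (hA : ∀ i j, IsUnit (A i j)) {d : ℤ}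
    (horth : Aᵀ * A = d • 1) {s : Finset m} (hs : sᶜ.card * Fintype.card n < d)
    {u : n → ℤ} (hu : u ≠ 0) :
    min (s.card : ℤ) 4 ≤ ∑ i ∈ s, (A *ᵥ u) i ^ 2 := by
  have hnorm : 0 < u ⬝ᵥ u :=
    (Finset.sum_nonneg fun j _ => mul_self_nonneg (u j)).lt_of_ne'
      (dotProduct_self_eq_zero.not.mpr hu)
  have hpos : 0 < ∑ i ∈ s, (A *ᵥ u) i ^ 2 :=
    (mul_pos (sub_pos.mpr hs) hnorm).trans_le (le_sum_sq_mulVec_of_isUnit hA horth s u)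
  refine min_card_four_le_sum_sq ?_ hpos
  simp only [← Int.not_even_iff_odd, even_mulVec_iff_of_odd fun i j => odd_of_isUnit (hA i j)]
  rcases em (Even (∑ j, u j)) with heven | hodd
  · exact .inr fun _ _ => heven
  · exact .inl fun _ _ => hodd

end IntegerMatrix

/-- The sign pattern `A` of the paper's `(4,3)` construction, so that `Φ = (1 / 2) • A`. It is kept
over `ℤ` because the lower bound on the child lattices comes from a parity argument. -/
def signPattern : Matrix (Fin 4) (Fin 3) ℤ :=
  !![1, 1, 1; -1, 1, -1; -1, -1, 1; -1, 1, 1]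

theorem isUnit_signPattern (i : Fin 4) (j : Fin 3) : IsUnit (signPattern i j) := by
  rw [Int.isUnit_iff]
  fin_cases i <;> fin_cases j <;> decide

theorem signPattern_transpose_mul_self : signPatternᵀ * signPattern = (4 : ℤ) • 1 := by
  decide

theorem smul_signPattern_map {R : Type*} [Ring R] (a : R) :
    a • signPattern.map (Int.cast : ℤ → R) = !![a, a, a; -a, a, -a; -a, -a, a; -a, a, a] := by
  ext i j
  fin_cases i <;> fin_cases j <;> simp [signPattern]

/-- The paper's `(4,3)` construction with `a = 1/2`: `Φ` has orthonormal columns,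
every child lattice `Φ_S ℤ³` has squared shortest nonzero vector at least `3/4`,
and the value `3/4` is attained for every 3-subset `S`. -/
theorem four_three_construction :
    letI a : ℝ := 1 / 2
    letI Φ : Matrix (Fin 4) (Fin 3) ℝ := !![a, a, a; -a, a, -a; -a, -a, a; -a, a, a]
    Φᵀ * Φ = 1 ∧
    (∀ S : {s : Finset (Fin 4) // s.card = 3}, ∀ u : Fin 3 → ℤ, u ≠ 0 →
      3 / 4 ≤ sqnorm ((rowsSub Φ S).mulVec fun j => (u j : ℝ))) ∧
    (∀ S : {s : Finset (Fin 4) // s.card = 3}, ∃ u : Fin 3 → ℤ, u ≠ 0 ∧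
      sqnorm ((rowsSub Φ S).mulVec fun j => (u j : ℝ)) = 3 / 4) := by
  rw [← smul_signPattern_map (1 / 2)]
  refine ⟨smul_intCast_transpose_mul_self_eq_one signPattern_transpose_mul_self (by norm_num),
    fun S u hu => ?_, fun S => ⟨Pi.single 0 1, by simp, ?_⟩⟩
  · have hdeleted : S.1ᶜ.card = 1 := by rw [Finset.card_compl, S.2, Fintype.card_fin]
    have hthree : 3 ≤ ∑ i ∈ S.1, (signPattern *ᵥ u) i ^ 2 := by
      simpa [S.2] using min_card_four_le_sum_sq_mulVec isUnit_signPattern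
        signPattern_transpose_mul_self (s := S.1) (by simp [hdeleted]) hu
    have hthree_real : (3 : ℝ) ≤ (∑ i ∈ S.1, (signPattern *ᵥ u) i ^ 2 : ℤ) := mod_cast hthree
    rw [sqnorm_rowsSub_smul_intCast]
    linarith
  · rw [sqnorm_rowsSub_smul_intCast, sum_sq_mulVec_single_one_of_isUnit isUnit_signPattern, S.2]
    norm_num
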